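/- arXiv:2406.18383 — 3 statements merged into one kernel-verified Lean document; each statement's English description precedes it below -/
import Mathlib

section
/- For every x ∈ B^ℕ, the limit lim_{ℓ→∞} liminf_{n→∞} Hc^{n,ℓ}(x) exists and equals h̲(x). -/
open Filter Topology

/-- The factor of length `len` of the sequence `x` starting at position `i`. -/
def factor (x : ℕ → Bool) (i len : ℕ) : List Bool :=
  List.ofFn (fun j : Fin len => x (i + j))

/-- Number of (possibly overlapping) occurrences of the word `u`
in the prefix `x[0:n)` of the sequence `x`. -/
def occ (x : ℕ → Bool) (n : ℕ) (u : List Bool) : ℕ :=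
  ((Finset.range (n + 1 - u.length)).filter (fun i => factor x i u.length = u)).card

/-- Non-aligned `ℓ`-block entropy of the prefix `x[0:n)`
(logs are base 2, with the convention `0 · log 0 = 0`). -/
noncomputable def hBlock (ℓ : ℕ) (x : ℕ → Bool) (n : ℕ) : ℝ :=
  -(1 / (ℓ : ℝ)) * ∑ u : Fin ℓ → Bool,
    ((occ x n (List.ofFn u) : ℝ) / ((n : ℝ) - ℓ + 1)) *
      Real.logb 2 ((occ x n (List.ofFn u) : ℝ) / ((n : ℝ) - ℓ + 1))

/-- `h̲(x) = lim_{ℓ→∞} liminf_{n→∞} h_ℓ(x[0:n))` (the limit in `ℓ` exists). -/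
noncomputable def hLow (x : ℕ → Bool) : ℝ :=
  atTop.liminf fun ℓ => atTop.liminf fun n => hBlock ℓ x n

/-- `h̄(x) = lim_{ℓ→∞} limsup_{n→∞} h_ℓ(x[0:n))` (the limit in `ℓ` exists). -/
noncomputable def hUp (x : ℕ → Bool) : ℝ :=
  atTop.limsup fun ℓ => atTop.limsup fun n => hBlock ℓ x n

/-- `γ_ℓ(x[0:n))`: normalized minimal number of prediction errors when predicting
`x[i]` from the preceding `ℓ` symbols `x[i-ℓ:i)`, for `i ∈ {ℓ,…,n-1}`. -/
noncomputable def gammaWord (ℓ : ℕ) (x : ℕ → Bool) (n : ℕ) : ℝ :=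
  (1 / ((n : ℝ) - ℓ)) *
    ((Finset.univ : Finset ((Fin ℓ → Bool) → Bool)).inf' Finset.univ_nonempty
      (fun f => ((((Finset.Ico ℓ n).filter
        (fun i => x i ≠ f (fun j => x (i - ℓ + j)))).card : ℝ))))

/-- `β_ℓ(x[0:n))`: normalized minimal number of prediction errors when predicting
`x[i]` from the following `ℓ` symbols `x[i+1:i+ℓ+1)`, for `i ∈ {0,…,n-ℓ-1}`. -/
noncomputable def betaWord (ℓ : ℕ) (x : ℕ → Bool) (n : ℕ) : ℝ :=
  (1 / ((n : ℝ) - ℓ)) *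
    ((Finset.univ : Finset ((Fin ℓ → Bool) → Bool)).inf' Finset.univ_nonempty
      (fun f => ((((Finset.range (n - ℓ)).filter
        (fun i => x i ≠ f (fun j => x (i + 1 + j)))).card : ℝ))))

/-- `γ̲(x) = lim_{ℓ→∞} liminf_{n→∞} γ_ℓ(x[0:n))` (the limit in `ℓ` exists, by monotonicity). -/
noncomputable def gammaLow (x : ℕ → Bool) : ℝ :=
  atTop.liminf fun ℓ => atTop.liminf fun n => gammaWord ℓ x n

/-- `γ̄(x) = lim_{ℓ→∞} limsup_{n→∞} γ_ℓ(x[0:n))` (the limit in `ℓ` exists, by monotonicity). -/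
noncomputable def gammaUp (x : ℕ → Bool) : ℝ :=
  atTop.limsup fun ℓ => atTop.limsup fun n => gammaWord ℓ x n

/-- `β̲(x) = lim_{ℓ→∞} liminf_{n→∞} β_ℓ(x[0:n))` (the limit in `ℓ` exists, by monotonicity). -/
noncomputable def betaLow (x : ℕ → Bool) : ℝ :=
  atTop.liminf fun ℓ => atTop.liminf fun n => betaWord ℓ x n

/-- `β̄(x) = lim_{ℓ→∞} limsup_{n→∞} β_ℓ(x[0:n))` (the limit in `ℓ` exists, by monotonicity). -/
noncomputable def betaUp (x : ℕ → Bool) : ℝ :=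
  atTop.limsup fun ℓ => atTop.limsup fun n => betaWord ℓ x n

/-- Binary Shannon entropy function `H(α) = -α log α - (1-α) log (1-α)` (base-2 logs). -/
noncomputable def binEntropy (a : ℝ) : ℝ :=
  -(a * Real.logb 2 a) - (1 - a) * Real.logb 2 (1 - a)

/-- Conditional block entropy `Hc^{n,ℓ}(x)`:
`-Σ_{ā ∈ B^ℓ, a ∈ B, p(ā·a) > 0} p(ā·a) · log (p(ā·a)/p(ā))`, where
`p(ā) = occ(x[0:n-1), ā)/(n-ℓ)` and `p(ā·a) = occ(x[0:n), ā·a)/(n-ℓ)`. -/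
noncomputable def condEntropy (ℓ : ℕ) (x : ℕ → Bool) (n : ℕ) : ℝ :=
  -∑ u : Fin ℓ → Bool, ∑ a : Bool,
    (if 0 < ((occ x n (List.ofFn u ++ [a]) : ℝ) / ((n : ℝ) - ℓ)) then
      ((occ x n (List.ofFn u ++ [a]) : ℝ) / ((n : ℝ) - ℓ)) *
        Real.logb 2 (((occ x n (List.ofFn u ++ [a]) : ℝ) / ((n : ℝ) - ℓ)) /
          ((occ x (n - 1) (List.ofFn u) : ℝ) / ((n : ℝ) - ℓ)))
    else 0)

/-- The real number in `[0,1]` denoted by the binary sequence `x`. -/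
noncomputable def val (x : ℕ → Bool) : ℝ :=
  ∑' n : ℕ, (if x n then (1 : ℝ) else 0) / 2 ^ (n + 1)

/-!
Counting windows of length `ℓ` by their first `m` starting positions gives empirical laws that are
exactly consistent: summing out the last letter of an `(ℓ + 1)`-block gives the law of `ℓ`-blocks,
and summing out the first letter gives the law of `ℓ`-blocks of the shifted sequence. The chain rule
then writes the block entropy `H_ℓ` as the sum of the conditional entropies `D_k`, `k < ℓ`.
Conditioning reduces entropy, and the shift changes each frequency by at most `1 / m`, so
`D_{ℓ+1} ≤ D_ℓ + o(1)` as `m → ∞`. Hence `liminf_m D_ℓ` decreases to a limit, and the liminf of the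
Cesàro mean `H_ℓ / ℓ` has the same limit: it is at least the mean of the liminfs, and, because
almost all terms of the mean are at most `D_k + o(1)`, it is asymptotically at most `liminf_m D_k`
for every `k`.
-/

section LiminfOfMeans

variable {ι : Type*} {F : Filter ι} {a b : ℝ}

theorem liminf_le_liminf_add_const {f g : ι → ℝ} {c : ℝ} (hf : IsBoundedUnder (· ≥ ·) F f)
    (hg : IsCoboundedUnder (· ≥ ·) F g) (h : ∀ ε > 0, ∀ᶠ i in F, f i ≤ g i + c + ε) :
    liminf f F ≤ liminf g F + c := by
  refine le_of_forall_pos_le_add fun ε hε => liminf_le_of_frequently_le ?_ hf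
  have hfreq : ∃ᶠ i in F, g i < liminf g F + ε / 2 :=
    frequently_lt_of_liminf_lt hg (by linarith)
  refine (hfreq.and_eventually (h (ε / 2) (half_pos hε))).mono fun i hi => ?_
  linarith [hi.1, hi.2]

theorem mean_mem_Icc {d : ℕ → ℝ} (hd : ∀ k, d k ∈ Set.Icc a b) {l : ℕ} (hl : 0 < l) :
    (∑ k ∈ Finset.range l, d k) / l ∈ Set.Icc a b := by
  have hl' : (0 : ℝ) < l := Nat.cast_pos.2 hl
  rw [Set.mem_Icc, le_div_iff₀' hl', div_le_iff₀' hl', ← nsmul_eq_mul, ← nsmul_eq_mul]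
  exact ⟨by simpa using Finset.card_nsmul_le_sum (Finset.range l) d a fun k _ => (hd k).1,
    by simpa using Finset.sum_le_card_nsmul (Finset.range l) d b fun k _ => (hd k).2⟩

theorem isBoundedUnder_ge_of_mem_Icc {f : ι → ℝ} (hf : ∀ i, f i ∈ Set.Icc a b) :
    IsBoundedUnder (· ≥ ·) F f :=
  isBoundedUnder_of ⟨a, fun i => (hf i).1⟩

variable {D : ℕ → ι → ℝ}

theorem eventually_le_add_of_succ_le
    (hsucc : ∀ k, ∀ ε > 0, ∀ᶠ i in F, D (k + 1) i ≤ D k i + ε) {k j : ℕ} (hkj : k ≤ j) :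
    ∀ ε > 0, ∀ᶠ i in F, D j i ≤ D k i + ε := by
  induction j, hkj using Nat.le_induction with
  | base => exact fun ε hε => .of_forall fun i => le_add_of_nonneg_right hε.le
  | succ j _ ih =>
    intro ε hε
    filter_upwards [ih (ε / 2) (half_pos hε), hsucc j (ε / 2) (half_pos hε)] with i hj hj'
    linarith

variable [F.NeBot]

theorem isCoboundedUnder_ge_of_mem_Icc {f : ι → ℝ} (hf : ∀ i, f i ∈ Set.Icc a b) :
    IsCoboundedUnder (· ≥ ·) F f :=
  (isBoundedUnder_of ⟨b, fun i => (hf i).2⟩ : IsBoundedUnder (· ≤ ·) F f).isCoboundedUnder_ge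

theorem mean_liminf_le_liminf_mean (hD : ∀ k i, D k i ∈ Set.Icc a b) {l : ℕ} (hl : 0 < l) :
    (∑ k ∈ Finset.range l, liminf (D k) F) / l ≤
      liminf (fun i => (∑ k ∈ Finset.range l, D k i) / l) F := by
  have hmean (i : ι) := mean_mem_Icc (fun k => hD k i) hl
  refine le_of_forall_pos_sub_le fun ε hε =>
    le_liminf_of_le (isCoboundedUnder_ge_of_mem_Icc hmean) ?_
  have hlt : ∀ᶠ i in F, ∀ k ∈ Finset.range l, liminf (D k) F - ε < D k i :=
    (eventually_all_finset _).2 fun k _ =>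
      eventually_lt_of_lt_liminf (sub_lt_self _ hε) (isBoundedUnder_ge_of_mem_Icc (hD k))
  filter_upwards [hlt] with i hi
  have hl' : (0 : ℝ) < l := Nat.cast_pos.2 hl
  calc (∑ k ∈ Finset.range l, liminf (D k) F) / l - ε
      = (∑ k ∈ Finset.range l, (liminf (D k) F - ε)) / l := by
        rw [Finset.sum_sub_distrib, Finset.sum_const, Finset.card_range, nsmul_eq_mul, sub_div,
          mul_div_cancel_left₀ _ hl'.ne']
    _ ≤ (∑ k ∈ Finset.range l, D k i) / l := by
        gcongr with k hk
        exact (hi k hk).le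

theorem antitone_liminf (hD : ∀ k i, D k i ∈ Set.Icc a b)
    (hsucc : ∀ k, ∀ ε > 0, ∀ᶠ i in F, D (k + 1) i ≤ D k i + ε) :
    Antitone fun k => liminf (D k) F := by
  refine antitone_nat_of_succ_le fun k => ?_
  simpa using liminf_le_liminf_add_const (c := 0) (isBoundedUnder_ge_of_mem_Icc (hD (k + 1)))
    (isCoboundedUnder_ge_of_mem_Icc (hD k)) (by simpa using hsucc k)

theorem liminf_mean_le (hD : ∀ k i, D k i ∈ Set.Icc a b)
    (hsucc : ∀ k, ∀ ε > 0, ∀ᶠ i in F, D (k + 1) i ≤ D k i + ε) {k l : ℕ} (hkl : k ≤ l)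
    (hl : 0 < l) :
    liminf (fun i => (∑ j ∈ Finset.range l, D j i) / l) F ≤
      liminf (D k) F + k * (b - a) / l := by
  have hmean (i : ι) := mean_mem_Icc (fun k => hD k i) hl
  refine liminf_le_liminf_add_const (isBoundedUnder_ge_of_mem_Icc hmean)
    (isCoboundedUnder_ge_of_mem_Icc (hD k)) fun ε hε => ?_
  have htail : ∀ᶠ i in F, ∀ j ∈ Finset.Ico k l, D j i ≤ D k i + ε :=
    (eventually_all_finset _).2 fun j hj =>
      eventually_le_add_of_succ_le hsucc (Finset.mem_Ico.1 hj).1 ε hε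
  filter_upwards [htail] with i hi
  have : (0 : ℝ) < l := Nat.cast_pos.2 hl
  have hinitial : ∑ j ∈ Finset.range k, D j i ≤ k * (D k i + (b - a) + ε) := by
    rw [← nsmul_eq_mul]
    simpa only [Finset.card_range] using Finset.sum_le_card_nsmul (Finset.range k) (D · i)
      (D k i + (b - a) + ε) fun j _ => by linarith [(hD j i).2, (hD k i).1]
  have hfinal : ∑ j ∈ Finset.Ico k l, D j i ≤ (l - k) * (D k i + ε) := by
    rw [← Nat.cast_sub hkl, ← nsmul_eq_mul]
    simpa only [Nat.card_Ico] using Finset.sum_le_card_nsmul (Finset.Ico k l) (D · i) _ hi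
  calc (∑ j ∈ Finset.range l, D j i) / l
      ≤ (k * (D k i + (b - a) + ε) + (l - k) * (D k i + ε)) / l := by
        rw [← Finset.sum_range_add_sum_Ico _ hkl]
        gcongr
    _ = D k i + k * (b - a) / l + ε := by field_simp; ring

theorem exists_tendsto_liminf_and_tendsto_liminf_mean (hD : ∀ k i, D k i ∈ Set.Icc a b)
    (hsucc : ∀ k, ∀ ε > 0, ∀ᶠ i in F, D (k + 1) i ≤ D k i + ε) :
    ∃ c, Tendsto (fun k => liminf (D k) F) atTop (𝓝 c) ∧
      Tendsto (fun l : ℕ => liminf (fun i => (∑ k ∈ Finset.range l, D k i) / l) F) atTop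
        (𝓝 c) := by
  have hbdd : BddBelow (Set.range fun k => liminf (D k) F) := by
    refine ⟨a, Set.forall_mem_range.2 fun k => ?_⟩
    exact le_liminf_of_le (isCoboundedUnder_ge_of_mem_Icc (hD k)) (.of_forall fun i => (hD k i).1)
  have hlim := tendsto_atTop_ciInf (antitone_liminf hD hsucc) hbdd
  refine ⟨_, hlim, tendsto_order.2 ⟨fun y hy => ?_, fun y hy => ?_⟩⟩
  · filter_upwards [hlim.cesaro.eventually_const_lt hy, eventually_gt_atTop 0] with l hyl hl
    rw [← div_eq_inv_mul] at hyl
    exact hyl.trans_le (mean_liminf_le_liminf_mean hD hl)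
  · obtain ⟨k, hk⟩ := exists_lt_of_ciInf_lt hy
    have herror : Tendsto (fun l : ℕ => liminf (D k) F + k * (b - a) / l) atTop
        (𝓝 (liminf (D k) F)) := by
      simpa using (tendsto_const_div_atTop_nhds_zero_nat (k * (b - a))).const_add
        (liminf (D k) F)
    filter_upwards [herror.eventually_lt_const hk, eventually_ge_atTop k, eventually_gt_atTop 0]
      with l hly hkl hl
    exact (liminf_mean_le hD hsucc hkl hl).trans_lt hly

end LiminfOfMeans

section Entropy

variable {α β γ : Type*}

theorem sum_mul_log_div_sum_le_sum_mul_log_div {s : Finset γ} {f g : γ → ℝ} (hf : ∀ i ∈ s, 0 ≤ f i)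
    (hg : ∀ i ∈ s, 0 ≤ g i) (hfg : ∀ i ∈ s, g i = 0 → f i = 0) :
    (∑ i ∈ s, f i) * Real.log ((∑ i ∈ s, f i) / ∑ i ∈ s, g i) ≤
      ∑ i ∈ s, f i * Real.log (f i / g i) := by
  set G := ∑ i ∈ s, g i with hG
  rcases (Finset.sum_nonneg hg).eq_or_lt with hzero | hpos
  · have hf_zero (i) (hi : i ∈ s) : f i = 0 :=
      hfg i hi ((Finset.sum_eq_zero_iff_of_nonneg hg).1 hzero.symm i hi)
    rw [Finset.sum_eq_zero hf_zero, zero_mul]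
    exact (Finset.sum_eq_zero fun i hi => by rw [hf_zero i hi, zero_mul]).ge
  have hcancel (i) (hi : i ∈ s) : g i / G * (f i / g i) = f i / G := by
    rcases eq_or_ne (g i) 0 with hgi | hgi
    · simp [hgi, hfg i hi hgi]
    · field_simp
  have hjensen := Real.convexOn_mul_log.map_sum_le (t := s) (w := fun i => g i / G)
    (p := fun i => f i / g i) (fun i hi => div_nonneg (hg i hi) hpos.le)
    (by rw [← Finset.sum_div, ← hG, div_self hpos.ne'])
    (fun i hi => div_nonneg (hf i hi) (hg i hi))
  simp only [smul_eq_mul, ← mul_assoc] at hjensen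
  rw [Finset.sum_congr rfl hcancel,
    Finset.sum_congr rfl fun i hi => congrArg (· * Real.log (f i / g i)) (hcancel i hi)] at hjensen
  simp only [div_mul_eq_mul_div, ← Finset.sum_div] at hjensen
  exact (div_le_div_iff_of_pos_right hpos).1 hjensen

variable [Fintype α] [Fintype β]

/-- Shannon entropy, in nats, of a mass function on a finite type; the total mass is not required
to be `1`. -/
noncomputable def shannonEntropy (p : α → ℝ) : ℝ :=
  ∑ u, Real.negMulLog (p u)

/-- Conditional Shannon entropy, in nats, of the second coordinate given the first one under a joint
mass function; the total mass is not required to be `1`. -/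
noncomputable def conditionalEntropy (p : α → β → ℝ) : ℝ :=
  -∑ u, ∑ a, p u a * Real.log (p u a / ∑ a', p u a')

variable {p : α → β → ℝ}

theorem conditionalEntropy_nonneg (hp : ∀ u a, 0 ≤ p u a) : 0 ≤ conditionalEntropy p := by
  refine neg_nonneg.2 (Finset.sum_nonpos fun u _ => Finset.sum_nonpos fun a _ => ?_)
  have hmarginal : 0 ≤ ∑ a', p u a' := Finset.sum_nonneg fun a' _ => hp u a'
  have hle : p u a ≤ ∑ a', p u a' :=
    Finset.single_le_sum (fun a' _ => hp u a') (Finset.mem_univ a)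
  exact mul_nonpos_of_nonneg_of_nonpos (hp u a)
    (Real.log_nonpos (div_nonneg (hp u a) hmarginal) (div_le_one_of_le₀ hle hmarginal))

theorem conditionalEntropy_le_mul_log_card (hp : ∀ u a, 0 ≤ p u a) :
    conditionalEntropy p ≤ (∑ u, ∑ a, p u a) * Real.log (Fintype.card β) := by
  rw [conditionalEntropy, neg_le, Finset.sum_mul, ← Finset.sum_neg_distrib]
  refine Finset.sum_le_sum fun u _ => ?_
  have hlogsum := sum_mul_log_div_sum_le_sum_mul_log_div (s := Finset.univ) (f := p u)
    (g := fun _ => ∑ a', p u a') (fun a _ => hp u a)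
    (fun _ _ => Finset.sum_nonneg fun a _ => hp u a)
    (fun a _ h => (Fintype.sum_eq_zero_iff_of_nonneg (hp u)).1 h ▸ rfl)
  refine le_trans (le_of_eq ?_) hlogsum
  rcases eq_or_ne (∑ a, p u a) 0 with hzero | hzero
  · simp [hzero]
  · rw [Finset.sum_const, Finset.card_univ, nsmul_eq_mul, div_mul_cancel_right₀ hzero,
      Real.log_inv, mul_neg]

theorem sum_conditionalEntropy_le {s : Finset γ} {q : γ → α → β → ℝ}
    (hq : ∀ i u a, 0 ≤ q i u a) :
    ∑ i ∈ s, conditionalEntropy (q i) ≤ conditionalEntropy fun u a => ∑ i ∈ s, q i u a := by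
  simp only [conditionalEntropy]
  rw [Finset.sum_neg_distrib, Finset.sum_comm]
  refine neg_le_neg ?_
  refine Finset.sum_le_sum fun u _ => ?_
  rw [Finset.sum_comm (s := s)]
  refine Finset.sum_le_sum fun a _ => ?_
  rw [Finset.sum_comm (t := s)]
  exact sum_mul_log_div_sum_le_sum_mul_log_div (fun i _ => hq i u a)
    (fun i _ => Finset.sum_nonneg fun a' _ => hq i u a')
    fun i _ h => (Fintype.sum_eq_zero_iff_of_nonneg (hq i u)).1 h ▸ rfl

theorem sum_shannonEntropy_eq_add_conditionalEntropy (hp : ∀ u a, 0 ≤ p u a) :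
    ∑ u, shannonEntropy (p u) =
      (shannonEntropy fun u => ∑ a, p u a) + conditionalEntropy p := by
  simp only [shannonEntropy, conditionalEntropy]
  rw [← Finset.sum_neg_distrib, ← Finset.sum_add_distrib]
  refine Finset.sum_congr rfl fun u _ => ?_
  rw [Real.negMulLog, neg_mul, Finset.sum_mul, ← neg_add, ← Finset.sum_add_distrib,
    ← Finset.sum_neg_distrib]
  refine Finset.sum_congr rfl fun a _ => ?_
  rcases (hp u a).eq_or_lt with hzero | hpos
  · simp [← hzero]
  · have hmarginal : 0 < ∑ a', p u a' := hpos.trans_le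
      (Finset.single_le_sum (fun a' _ => hp u a') (Finset.mem_univ a))
    rw [Real.negMulLog, Real.log_div hpos.ne' hmarginal.ne']
    ring

end Entropy

section Tuples

variable {α M : Type*} [AddCommMonoid M] [Fintype α] {l : ℕ}

theorem sum_eq_sum_snoc (f : (Fin (l + 1) → α) → M) :
    ∑ w, f w = ∑ u : Fin l → α, ∑ a, f (Fin.snoc u a) := by
  rw [← (Fin.snocEquiv fun _ : Fin (l + 1) => α).sum_comp, Fintype.sum_prod_type_right]
  rfl

theorem sum_eq_sum_cons (f : (Fin (l + 1) → α) → M) :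
    ∑ w, f w = ∑ a, ∑ u : Fin l → α, f (Fin.cons a u) := by
  rw [← (Fin.consEquiv fun _ : Fin (l + 1) => α).sum_comp, Fintype.sum_prod_type]
  rfl

end Tuples

section Blocks

variable {α : Type*}

/-- The length-`l` window of the sequence `x` starting at position `i`. -/
def window (x : ℕ → α) (l i : ℕ) : Fin l → α :=
  fun j => x (i + j)

theorem window_succ_eq_snoc (x : ℕ → α) (l i : ℕ) :
    window x (l + 1) i = Fin.snoc (window x l i) (x (i + l)) := by
  funext j
  cases j using Fin.lastCases <;> simp [window]

theorem window_succ_eq_cons (x : ℕ → α) (l i : ℕ) :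
    window x (l + 1) i = Fin.cons (x i) (window x l (i + 1)) := by
  funext j
  cases j using Fin.cases <;> simp [window, add_assoc, add_comm 1]

theorem window_shift (x : ℕ → α) (l i : ℕ) :
    window (fun k => x (k + 1)) l i = window x l (i + 1) := by
  funext j
  simp only [window, add_right_comm]

variable [DecidableEq α]

/-- The number of occurrences of the block `u` in `x` among the starting positions `0, …, m - 1`.
The parameter is the number `m` of windows, not the length `m + l - 1` of the prefix they cover, so
that counts of blocks of different lengths are comparable. -/
def blockCount (x : ℕ → α) (m l : ℕ) (u : Fin l → α) : ℕ :=
  ((Finset.range m).filter fun i => window x l i = u).card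

/-- The relative frequency of the block `u` in `x` among the starting positions `0, …, m - 1`;
it is `0` for `m = 0`. -/
noncomputable def blockFreq (x : ℕ → α) (m l : ℕ) (u : Fin l → α) : ℝ :=
  blockCount x m l u / m

theorem blockFreq_nonneg (x : ℕ → α) (m l : ℕ) (u : Fin l → α) : 0 ≤ blockFreq x m l u := by
  unfold blockFreq; positivity

theorem blockFreq_le_one (x : ℕ → α) (m l : ℕ) (u : Fin l → α) : blockFreq x m l u ≤ 1 := by
  refine div_le_one_of_le₀ (Nat.cast_le.2 ?_) (Nat.cast_nonneg m)
  exact (Finset.card_filter_le _ _).trans_eq (Finset.card_range m)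

theorem abs_blockFreq_shift_sub_le (x : ℕ → α) (m l : ℕ) (u : Fin l → α) :
    |blockFreq (fun i => x (i + 1)) m l u - blockFreq x m l u| ≤ 1 / m := by
  have htelescope : (blockCount (fun i => x (i + 1)) m l u : ℝ) - blockCount x m l u =
      (if window x l m = u then 1 else 0) - if window x l 0 = u then 1 else 0 := by
    simp only [blockCount, window_shift, Finset.natCast_card_filter]
    rw [← Finset.sum_sub_distrib,
      Finset.sum_range_sub fun i => if window x l i = u then (1 : ℝ) else 0]
  rw [blockFreq, blockFreq, ← sub_div, abs_div, Nat.abs_cast, htelescope]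
  gcongr
  split_ifs <;> norm_num

variable [Fintype α]

theorem sum_blockFreq_snoc (x : ℕ → α) (m l : ℕ) (u : Fin l → α) :
    ∑ a, blockFreq x m (l + 1) (Fin.snoc u a) = blockFreq x m l u := by
  have hcount : blockCount x m l u = ∑ a, blockCount x m (l + 1) (Fin.snoc u a) := by
    simp only [blockCount, window_succ_eq_snoc, Fin.snoc_inj, ← Finset.filter_filter]
    exact Finset.card_eq_sum_card_fiberwise fun _ _ => Finset.mem_coe.2 (Finset.mem_univ _)
  simp only [blockFreq, hcount, Nat.cast_sum, Finset.sum_div]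

theorem sum_blockFreq_cons (x : ℕ → α) (m l : ℕ) (u : Fin l → α) :
    ∑ a, blockFreq x m (l + 1) (Fin.cons a u) = blockFreq (fun i => x (i + 1)) m l u := by
  have hcons (a : α) : blockCount x m (l + 1) (Fin.cons a u) =
      (((Finset.range m).filter fun i => window x l (i + 1) = u).filter fun i => x i = a).card := by
    simp only [blockCount, window_succ_eq_cons, Fin.cons_inj, Finset.filter_filter, and_comm]
  have hcount : blockCount (fun i => x (i + 1)) m l u =
      ∑ a, blockCount x m (l + 1) (Fin.cons a u) := by
    simp only [hcons]
    simp only [blockCount, window_shift]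
    exact Finset.card_eq_sum_card_fiberwise fun _ _ => Finset.mem_coe.2 (Finset.mem_univ _)
  simp only [blockFreq, hcount, Nat.cast_sum, Finset.sum_div]

theorem sum_blockFreq_le_one (x : ℕ → α) (m l : ℕ) : ∑ u, blockFreq x m l u ≤ 1 := by
  induction l with
  | zero => simpa using blockFreq_le_one x m 0 default
  | succ l ih => simpa only [sum_eq_sum_snoc, sum_blockFreq_snoc] using ih

/-- Entropy, in base `b`, of the empirical law of the `l`-blocks of `x` at the starting positions
`0, …, m - 1`. -/
noncomputable def blockEntropy (b : ℝ) (x : ℕ → α) (m l : ℕ) : ℝ :=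
  shannonEntropy (blockFreq x m l) / Real.log b

/-- Conditional entropy, in base `b`, of the letter that follows an `l`-block of `x` given that
block, under the empirical law at the starting positions `0, …, m - 1`. -/
noncomputable def condBlockEntropy (b : ℝ) (x : ℕ → α) (m l : ℕ) : ℝ :=
  conditionalEntropy (fun u a => blockFreq x m (l + 1) (Fin.snoc u a)) / Real.log b

theorem blockEntropy_zero (b : ℝ) (x : ℕ → α) (m : ℕ) : blockEntropy b x m 0 = 0 := by
  have hcount (u : Fin 0 → α) : blockCount x m 0 u = m := by
    simp [blockCount, Subsingleton.elim _ u]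
  rcases eq_or_ne m 0 with rfl | hm
  · simp [blockEntropy, shannonEntropy, blockFreq]
  · simp [blockEntropy, shannonEntropy, blockFreq, hcount, hm]

theorem blockEntropy_succ (b : ℝ) (x : ℕ → α) (m l : ℕ) :
    blockEntropy b x m (l + 1) = blockEntropy b x m l + condBlockEntropy b x m l := by
  have hchain := sum_shannonEntropy_eq_add_conditionalEntropy
    fun (u : Fin l → α) a => blockFreq_nonneg x m (l + 1) (Fin.snoc u a)
  simp only [sum_blockFreq_snoc] at hchain
  rw [blockEntropy, blockEntropy, condBlockEntropy, ← add_div, ← hchain, shannonEntropy,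
    sum_eq_sum_snoc]
  rfl

theorem blockEntropy_eq_sum_condBlockEntropy (b : ℝ) (x : ℕ → α) (m l : ℕ) :
    blockEntropy b x m l = ∑ k ∈ Finset.range l, condBlockEntropy b x m k := by
  induction l with
  | zero => simp [blockEntropy_zero]
  | succ l ih => rw [blockEntropy_succ, ih, Finset.sum_range_succ]

theorem tendsto_blockEntropy_shift_sub (b : ℝ) (x : ℕ → α) (l : ℕ) :
    Tendsto (fun m => blockEntropy b (fun i => x (i + 1)) m l - blockEntropy b x m l) atTop
      (𝓝 0) := by
  have hfreq (u : Fin l → α) : Tendsto (fun m => dist (blockFreq (fun i => x (i + 1)) m l u)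
      (blockFreq x m l u)) atTop (𝓝 0) :=
    squeeze_zero (fun _ => dist_nonneg) (fun m => abs_blockFreq_shift_sub_le x m l u)
      (tendsto_const_div_atTop_nhds_zero_nat 1)
  have huniform (u : Fin l → α) := tendsto_uniformity_iff_dist_tendsto_zero
    (f := fun m => (blockFreq (fun i => x (i + 1)) m l u, blockFreq x m l u)) |>.2 (hfreq u)
  have hmem (y : ℕ → α) (m : ℕ) (u : Fin l → α) : blockFreq y m l u ∈ Set.Icc (0 : ℝ) 1 :=
    ⟨blockFreq_nonneg y m l u, blockFreq_le_one y m l u⟩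
  have huc : UniformContinuousOn Real.negMulLog (Set.Icc 0 1) :=
    isCompact_Icc.uniformContinuousOn_of_continuous Real.continuous_negMulLog.continuousOn
  have hterm (u : Fin l → α) :
      Tendsto (fun m => Real.negMulLog (blockFreq (fun i => x (i + 1)) m l u) -
        Real.negMulLog (blockFreq x m l u)) atTop (𝓝 0) := by
    refine tendsto_zero_iff_norm_tendsto_zero.2 ?_
    refine tendsto_uniformity_iff_dist_tendsto_zero.1 (Tendsto.comp huc (tendsto_inf.2
      ⟨huniform u, tendsto_principal.2 ?_⟩))
    exact .of_forall fun m => ⟨hmem _ m u, hmem x m u⟩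
  simpa [blockEntropy, shannonEntropy, sub_div, Finset.sum_sub_distrib] using
    (tendsto_finsetSum Finset.univ fun u _ => hterm u).div_const (Real.log b)

variable {b : ℝ}

theorem condBlockEntropy_succ_le_shift (hb : 1 < b) (x : ℕ → α) (m l : ℕ) :
    condBlockEntropy b x m (l + 1) ≤ condBlockEntropy b (fun i => x (i + 1)) m l := by
  have hsplit : conditionalEntropy
      (fun (w : Fin (l + 1) → α) a => blockFreq x m (l + 1 + 1) (Fin.snoc w a)) =
      ∑ c, conditionalEntropy
        fun (u : Fin l → α) a => blockFreq x m (l + 1 + 1) (Fin.cons c (Fin.snoc u a)) := by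
    simp only [conditionalEntropy, sum_eq_sum_cons, Finset.sum_neg_distrib,
      Fin.cons_snoc_eq_snoc_cons]
  unfold condBlockEntropy
  gcongr
  · exact (Real.log_pos hb).le
  rw [hsplit]
  simp only [← sum_blockFreq_cons]
  exact sum_conditionalEntropy_le fun c u a => blockFreq_nonneg x m _ _

theorem eventually_condBlockEntropy_succ_le (hb : 1 < b) (x : ℕ → α) (l : ℕ) {ε : ℝ}
    (hε : 0 < ε) :
    ∀ᶠ m in atTop, condBlockEntropy b x m (l + 1) ≤ condBlockEntropy b x m l + ε := by
  have hdiff := (tendsto_blockEntropy_shift_sub b x (l + 1)).sub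
    (tendsto_blockEntropy_shift_sub b x l)
  simp only [blockEntropy_succ, sub_zero] at hdiff
  filter_upwards [hdiff.eventually_lt_const hε] with m hm
  linarith [condBlockEntropy_succ_le_shift hb x m l]

theorem condBlockEntropy_mem_Icc (hb : 1 < b) (x : ℕ → α) (m l : ℕ) :
    condBlockEntropy b x m l ∈ Set.Icc 0 (Real.logb b (Fintype.card α)) := by
  have hnonneg (u : Fin l → α) (a : α) := blockFreq_nonneg x m (l + 1) (Fin.snoc u a)
  have hlog := Real.log_pos hb
  refine ⟨div_nonneg (conditionalEntropy_nonneg hnonneg) hlog.le,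
    div_le_div_of_nonneg_right ?_ hlog.le⟩
  refine (conditionalEntropy_le_mul_log_card hnonneg).trans
    (mul_le_of_le_one_left (Real.log_natCast_nonneg _) ?_)
  simpa only [sum_blockFreq_snoc] using sum_blockFreq_le_one x m l

theorem tendsto_liminf_condEntropy_general (hb : 1 < b) (x : ℕ → α) :
    ∃ h, Tendsto (fun l => liminf (fun m => condBlockEntropy b x m l) atTop) atTop (𝓝 h) ∧
      Tendsto (fun l : ℕ => liminf (fun m => blockEntropy b x m l / l) atTop) atTop (𝓝 h) := by
  simp only [blockEntropy_eq_sum_condBlockEntropy]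
  exact exists_tendsto_liminf_and_tendsto_liminf_mean
    (fun l m => condBlockEntropy_mem_Icc hb x m l)
    fun l _ hε => eventually_condBlockEntropy_succ_le hb x l hε

end Blocks

theorem occ_ofFn (x : ℕ → Bool) (n : ℕ) {l : ℕ} (u : Fin l → Bool) :
    occ x n (List.ofFn u) = blockCount x (n + 1 - l) l u := by
  have hfactor (i : ℕ) : factor x i l = List.ofFn u ↔ window x l i = u := List.ofFn_inj
  simp only [occ, blockCount, List.length_ofFn, hfactor]

theorem ofFn_append_singleton {α : Type*} {l : ℕ} (u : Fin l → α) (a : α) :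
    List.ofFn u ++ [a] = List.ofFn (Fin.snoc u a : Fin (l + 1) → α) := by
  rw [List.ofFn_succ']
  simp only [Fin.snoc_castSucc, Fin.snoc_last, List.concat_eq_append]

theorem hBlock_add_eq_blockEntropy_div (x : ℕ → Bool) (l m : ℕ) :
    hBlock l x (m + l) = blockEntropy 2 x (m + 1) l / l := by
  have hstarts : m + l + 1 - l = m + 1 := by omega
  have hden : ((m + l : ℕ) : ℝ) - l + 1 = (m + 1 : ℕ) := by push_cast; ring
  simp only [hBlock, blockEntropy, shannonEntropy, blockFreq, Real.negMulLog, Real.logb, occ_ofFn,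
    hstarts, hden, mul_div_assoc', neg_mul, Finset.sum_neg_distrib, ← Finset.sum_div]
  ring

theorem condEntropy_add_eq_condBlockEntropy (x : ℕ → Bool) (l m : ℕ) :
    condEntropy l x (m + 1 + l) = condBlockEntropy 2 x (m + 1) l := by
  have hstarts : m + 1 + l + 1 - (l + 1) = m + 1 := by omega
  have hstarts' : m + 1 + l - 1 + 1 - l = m + 1 := by omega
  have hden : ((m + 1 + l : ℕ) : ℝ) - l = (m + 1 : ℕ) := by push_cast; ring
  simp only [condEntropy, ofFn_append_singleton, occ_ofFn, hstarts, hstarts', hden,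
    ← blockFreq.eq_def, condBlockEntropy, conditionalEntropy, sum_blockFreq_snoc]
  rw [neg_div, Finset.sum_div]
  congr! 2 with u
  rw [Finset.sum_div]
  congr! 1 with a
  rcases (blockFreq_nonneg x (m + 1) (l + 1) (Fin.snoc u a)).eq_or_lt with hzero | hpos
  · simp [← hzero]
  · rw [if_pos hpos, Real.logb, mul_div_assoc]

theorem liminf_hBlock (x : ℕ → Bool) (l : ℕ) :
    liminf (fun n => hBlock l x n) atTop =
      liminf (fun m => blockEntropy 2 x m l / l) atTop := by
  rw [← liminf_nat_add (fun n => hBlock l x n) l,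
    ← liminf_nat_add (fun m => blockEntropy 2 x m l / l) 1]
  simp only [hBlock_add_eq_blockEntropy_div]

theorem liminf_condEntropy (x : ℕ → Bool) (l : ℕ) :
    liminf (fun n => condEntropy l x n) atTop =
      liminf (fun m => condBlockEntropy 2 x m l) atTop := by
  rw [← liminf_nat_add (fun n => condEntropy l x n) (1 + l),
    ← liminf_nat_add (fun m => condBlockEntropy 2 x m l) 1]
  simp only [← add_assoc, condEntropy_add_eq_condBlockEntropy]

theorem tendsto_liminf_condEntropy (x : ℕ → Bool) :
    Filter.Tendsto (fun ℓ => atTop.liminf fun n => condEntropy ℓ x n) atTop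
      (nhds (hLow x)) := by
  obtain ⟨h, hcond, hblock⟩ := tendsto_liminf_condEntropy_general one_lt_two x
  simpa only [hLow, liminf_condEntropy, liminf_hBlock, hblock.liminf_eq] using hcond
end

section
/- There exists x ∈ B^ℕ such that β̲(x) = β̄(x), γ̲(x) = γ̄(x), and β̄(x) < γ̲(x). In particular the functions β̲ and γ̲ are different, and so are β̄ and γ̄. -/
open Filter Topology

/-!
Encode a normal sequence of pairs of bits `(a, b)` by concatenating the blocks
`1 1 0 a 0 (a ∧ b) 0`. Since `11` occurs only at the beginning of a block, a predictor with a long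
enough window knows the position of each symbol in its block; only the symbols `a` and `a ∧ b` are
uncertain. Read from right to left, `a ∧ b` comes first and is guessed as `0`, and then `a` is
guessed as the known value of `a ∧ b`: each guess fails with probability `1 / 4`. Read from left to
right, `a` comes first and is an unbiased bit, missed with probability `1 / 2`, and then `a ∧ b` is
missed with probability `1 / 4`. Blocks being independent, no rule does better, so the error rates
per symbol are `(1 / 4 + 1 / 4) / 7 = 1 / 14` backwards and `(1 / 2 + 1 / 4) / 7 = 3 / 28` forwards.
-/

open MeasureTheory ProbabilityTheory
open scoped BigOperators Finset

section IteratedLimits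

variable {ι κ α : Type*} [ConditionallyCompleteLinearOrder α] [TopologicalSpace α] [OrderTopology α]
  {l : Filter ι} {l' : Filter κ} [l.NeBot] [l'.NeBot] {u : ι → κ → α} {a : α}

lemma liminf_liminf_eq_of_eventually_tendsto (h : ∀ᶠ i in l, Tendsto (u i) l' (𝓝 a)) :
    l.liminf (fun i => l'.liminf (u i)) = a :=
  (tendsto_const_nhds.congr' (h.mono fun _ hi => hi.liminf_eq.symm)).liminf_eq

lemma limsup_limsup_eq_of_eventually_tendsto (h : ∀ᶠ i in l, Tendsto (u i) l' (𝓝 a)) :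
    l.limsup (fun i => l'.limsup (u i)) = a :=
  (tendsto_const_nhds.congr' (h.mono fun _ hi => hi.limsup_eq.symm)).limsup_eq

end IteratedLimits

/-- The sequence `e` has asymptotic (Cesàro) mean `c`. -/
def HasMean (e : ℕ → ℝ) (c : ℝ) : Prop :=
  Tendsto (fun N : ℕ => (∑ i ∈ Finset.range N, e i) / N) atTop (𝓝 c)

namespace HasMean

variable {e : ℕ → ℝ} {c : ℝ}

lemma mul_const (h : HasMean e c) (a : ℝ) : HasMean (fun i => e i * a) (c * a) := by
  refine (Tendsto.mul_const a h).congr fun N => ?_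
  rw [← Finset.sum_mul, div_mul_eq_mul_div]

lemma sum {ι : Type*} {s : Finset ι} {e : ι → ℕ → ℝ} {c : ι → ℝ}
    (h : ∀ j ∈ s, HasMean (e j) (c j)) : HasMean (fun i => ∑ j ∈ s, e j i) (∑ j ∈ s, c j) := by
  refine (tendsto_finsetSum s h).congr fun N => ?_
  rw [Finset.sum_comm, Finset.sum_div]

lemma add_left_iff (m : ℕ) : HasMean (fun i => e (m + i)) c ↔ HasMean e c := by
  have hratio : Tendsto (fun N : ℕ => (m + N : ℝ) / N) atTop (𝓝 1) := by
    have := (tendsto_const_div_atTop_nhds_zero_nat (m : ℝ)).add_const 1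
    rw [zero_add] at this
    refine this.congr' ?_
    filter_upwards [eventually_ne_atTop 0] with N hN
    field_simp
  have hinitial := tendsto_const_div_atTop_nhds_zero_nat (∑ i ∈ Finset.range m, e i)
  have hsplit (N : ℕ) := Finset.sum_range_add e m N
  unfold HasMean
  rw [← tendsto_add_atTop_iff_nat (f := fun N : ℕ => (∑ i ∈ Finset.range N, e i) / N) m]
  constructor <;> intro h
  · have := (h.add hinitial).div hratio one_ne_zero
    rw [add_zero, div_one] at this
    refine this.congr' ?_
    filter_upwards [eventually_ne_atTop 0] with N hN
    rw [add_comm N m, hsplit]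
    push_cast
    simp only [Pi.div_apply]
    field_simp
    ring
  · have := (h.mul hratio).sub hinitial
    rw [sub_zero, mul_one] at this
    refine this.congr' ?_
    filter_upwards [eventually_ne_atTop 0] with N hN
    rw [add_comm N m, hsplit]
    push_cast
    field_simp
    ring

lemma ite_dvd_succ {K : ℕ} (hK : K ≠ 0) (h : HasMean (fun q => e (K * q + (K - 1))) c) :
    HasMean (fun i => if K ∣ i + 1 then e i else 0) (c / K) := by
  have hsum (N : ℕ) : ∑ i ∈ Finset.range N, (if K ∣ i + 1 then e i else 0) =
      ∑ q ∈ Finset.range (N / K), e (K * q + (K - 1)) := by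
    induction N with
    | zero => simp
    | succ N ih =>
      rw [Finset.sum_range_succ, ih, Nat.succ_div]
      split_ifs with hN
      · have hlast : K * (N / K + 1) = N + 1 := by
          rw [← Nat.succ_div_of_dvd hN, Nat.mul_div_cancel' hN]
        rw [Finset.sum_range_succ, show K * (N / K) + (K - 1) = N by lia]
      · simp
  have hratio : Tendsto (fun N : ℕ => ((N / K : ℕ) : ℝ) / N) atTop (𝓝 (1 / K)) := by
    refine ((tendsto_nat_floor_mul_div_atTop (R := ℝ) (a := 1 / K) (by positivity)).comp
      tendsto_natCast_atTop_atTop).congr fun N => ?_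
    rw [Function.comp_apply, one_div_mul_eq_div, Nat.floor_div_natCast, Nat.floor_natCast]
  have hdiv : Tendsto (fun N : ℕ => N / K) atTop atTop := Nat.tendsto_div_const_atTop hK
  rw [← mul_one_div]
  refine ((Tendsto.comp h hdiv).mul hratio).congr' ?_
  filter_upwards [hdiv.eventually_ne_atTop 0] with N hN
  rw [hsum, Function.comp_apply]
  field_simp

lemma of_residues {K : ℕ} [NeZero K] {c : Fin K → ℝ}
    (h : ∀ p : Fin K, HasMean (fun q => e (K * q + p)) (c p)) : HasMean e ((∑ p, c p) / K) := by
  have hclass (p : Fin K) : HasMean (fun i => if i % K = p then e i else 0) (c p / K) := by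
    rw [← add_left_iff (p + 1)]
    have hlast : HasMean (fun q => e (p + 1 + (K * q + (K - 1)))) (c p) := by
      convert (add_left_iff 1).2 (h p) using 3 with q
      have := NeZero.pos K
      rw [mul_add, mul_one]
      lia
    convert ite_dvd_succ (e := fun i => e (p + 1 + i)) (NeZero.ne K) hlast using 3 with i
    calc (p + 1 + i) % K = p ↔ p + (i + 1) ≡ p [MOD K] := by
          rw [Nat.ModEq, Nat.mod_eq_of_lt p.isLt, add_assoc, add_comm 1]
      _ ↔ K ∣ i + 1 := Nat.add_modEq_left_iff
  rw [Finset.sum_div]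
  convert sum fun p (_ : p ∈ Finset.univ) => hclass p using 2 with i
  rw [Finset.sum_eq_single (Fin.ofNat K i), if_pos (Fin.val_ofNat K i).symm]
  · exact fun p _ hp => if_neg fun h => hp (Fin.ext h.symm)
  · simp

end HasMean

/-- `y` is normal: every word `w` occurs in it with the frequency `|A|^{-|w|}` of a uniformly
random sequence. -/
def IsNormalSeq {A : Type*} [Fintype A] [DecidableEq A] (y : ℕ → A) : Prop :=
  ∀ (k : ℕ) (w : Fin k → A),
    HasMean (fun q => if (fun j : Fin k => y (q + j)) = w then 1 else 0)
      (1 / (Fintype.card A : ℝ) ^ k)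

section Existence

variable {Ω A : Type*} [MeasurableSpace Ω] [MeasurableSpace A] {P : Measure Ω} {X : ℕ → Ω → A}

lemma indepFun_windows (hX : ∀ i, Measurable (X i)) (hind : iIndepFun X P) {k a b : ℕ}
    (hab : a + k ≤ b) :
    IndepFun (fun ω (j : Fin k) => X (a + j) ω) (fun ω (j : Fin k) => X (b + j) ω) P := by
  let window (a : ℕ) : Finset ℕ := Finset.Ico a (a + k)
  have hmem (a : ℕ) (j : Fin k) : a + j ∈ window a := by simp [window]
  have hdisj : Disjoint (window a) (window b) := by
    grind [Finset.disjoint_left]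
  exact (hind.indepFun_finset _ _ hdisj hX).comp
    (φ := fun u j => u ⟨_, hmem a j⟩) (ψ := fun u j => u ⟨_, hmem b j⟩)
    (by fun_prop) (by fun_prop)

variable {ν : Measure A} {k : ℕ}

lemma map_window_eq_pi (hlaw : ∀ i, HasLaw (X i) ν P) (hind : iIndepFun X P) (a : ℕ) :
    P.map (fun ω (j : Fin k) => X (a + j) ω) = Measure.pi fun _ => ν := by
  have hinj : Function.Injective fun j : Fin k => a + (j : ℕ) :=
    (add_right_injective a).comp Fin.val_injective
  rw [(hind.precomp hinj).map_fun_eq_pi_map fun j => (hlaw _).aemeasurable]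
  simp only [(hlaw _).map_eq]

/-- Windows starting at positions of a fixed residue modulo `k + 1` do not overlap, so that the
strong law of large numbers applies to each residue class. -/
lemma ae_hasMean_window [IsProbabilityMeasure P] (hX : ∀ i, Measurable (X i))
    (hlaw : ∀ i, HasLaw (X i) ν P) (hind : iIndepFun X P) {F : (Fin k → A) → ℝ}
    (hF : Measurable F) (hint : Integrable F (Measure.pi fun _ => ν)) :
    ∀ᵐ ω ∂P, HasMean (fun q => F fun j => X (q + j) ω) (∫ w, F w ∂Measure.pi fun _ => ν) := by
  let W (a : ℕ) (ω : Ω) : Fin k → A := fun j => X (a + j) ω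
  have hW (a : ℕ) : Measurable (W a) := by fun_prop
  have hWlaw (a : ℕ) : P.map (W a) = Measure.pi fun _ => ν := map_window_eq_pi hlaw hind a
  have hslln (r : Fin (k + 1)) : ∀ᵐ ω ∂P, HasMean (fun q => F (W ((k + 1) * q + r) ω))
      (∫ w, F w ∂Measure.pi fun _ => ν) := by
    have hmean : ∫ w, F w ∂(Measure.pi fun _ => ν) = ∫ ω, F (W ((k + 1) * 0 + r) ω) ∂P := by
      rw [← hWlaw ((k + 1) * 0 + r), integral_map (hW _).aemeasurable hF.aestronglyMeasurable]
    rw [hmean]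
    refine strong_law_ae_real (fun q ω => F (W ((k + 1) * q + r) ω)) ?_ ?_ fun q => ?_
    · exact Integrable.comp_measurable (by rwa [hWlaw]) (hW _)
    · have hlt {a b : ℕ} (hab : a < b) :
          IndepFun (F ∘ W ((k + 1) * a + r)) (F ∘ W ((k + 1) * b + r)) P :=
        (indepFun_windows hX hind (by nlinarith)).comp hF hF
      exact fun a b hab => hab.lt_or_gt.elim hlt fun h => (hlt h).symm
    · exact IdentDistrib.comp ⟨(hW _).aemeasurable, (hW _).aemeasurable, by rw [hWlaw, hWlaw]⟩ hF
  filter_upwards [ae_all_iff.2 hslln] with ω hω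
  have := HasMean.of_residues (e := fun q => F (W q ω)) hω
  rwa [Finset.sum_const, Finset.card_univ, Fintype.card_fin, nsmul_eq_mul,
    mul_div_cancel_left₀ _ (by positivity)] at this

end Existence

lemma exists_isNormalSeq (A : Type*) [Fintype A] [DecidableEq A] [Nonempty A] :
    ∃ y : ℕ → A, IsNormalSeq y := by
  let _ : MeasurableSpace A := ⊤
  let ν : Measure A := (PMF.uniformOfFintype A).toMeasure
  have hν (k : ℕ) (w : Fin k → A) :
      ∫ v, (if v = w then (1 : ℝ) else 0) ∂(Measure.pi fun _ => ν) =
        1 / (Fintype.card A : ℝ) ^ k := by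
    calc _ = (Measure.pi fun _ => ν).real {w} := by
          rw [← integral_indicator_one (measurableSet_singleton w)]
          simp [Set.indicator_apply]
      _ = _ := by
          rw [measureReal_def, Measure.pi_singleton]
          simp [ν]
  obtain ⟨Ω, _, P, X, hX, hlaw, hind, _⟩ := exists_iid ℕ ν
  have hae : ∀ᵐ ω ∂P, IsNormalSeq fun i => X i ω := by
    refine ae_all_iff.2 fun k => ae_all_iff.2 fun w => ?_
    rw [← hν k w]
    exact ae_hasMean_window (F := fun v => if v = w then 1 else 0) hX hlaw hind .of_discrete
      .of_finite
  exact ⟨_, hae.exists.choose_spec⟩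

/-- The sequence `x` with its first `n` terms dropped. -/
def shift {B : Type*} (n : ℕ) (x : ℕ → B) : ℕ → B := fun i => x (n + i)

section CylinderMean

variable {A : Type*} [Fintype A]

lemma expect_update {ι : Type*} [Fintype ι] [DecidableEq ι] (F : (ι → A) → ℝ) (m : ι) :
    𝔼 w : ι → A, 𝔼 a, F (Function.update w m a) = 𝔼 w, F w := by
  let swap (u : (ι → A) × A) : (ι → A) × A := (Function.update u.1 m u.2, u.1 m)
  have hswap : Function.Involutive swap := fun u => by simp [swap]
  calc 𝔼 w : ι → A, 𝔼 a, F (Function.update w m a)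
      = 𝔼 u : (ι → A) × A, F (swap u).1 := by
        rw [← Finset.univ_product_univ, Finset.expect_product]
    _ = 𝔼 u : (ι → A) × A, F u.1 := Fintype.expect_equiv hswap.toPerm _ _ fun _ => rfl
    _ = 𝔼 w, F w := by
        rw [← Finset.univ_product_univ, Finset.expect_product]
        refine Finset.expect_congr rfl fun w _ => ?_
        have : Nonempty A := ⟨w m⟩
        exact Fintype.expect_const (ι := A) (F w)

/-- The expectation of a functional `G` of a uniformly random sequence, where `G` only looks at the
terms of index at most `k`; beyond them the random word `w` is extended periodically. -/
noncomputable def cylinderMean (k : ℕ) (G : (ℕ → A) → ℝ) : ℝ :=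
  𝔼 w : Fin (k + 1) → A, G fun i => w (Fin.ofNat (k + 1) i)

variable {k : ℕ} {G : (ℕ → A) → ℝ}

lemma cylinderMean_resample (hG : DependsOn G (Set.Iic k)) {m : ℕ} (hm : m ≤ k) :
    cylinderMean k (fun z => 𝔼 a, G (Function.update z m a)) = cylinderMean k G := by
  rw [cylinderMean, cylinderMean,
    ← expect_update (fun w => G fun i => w (Fin.ofNat (k + 1) i)) (Fin.ofNat (k + 1) m)]
  refine Finset.expect_congr rfl fun w _ => Finset.expect_congr rfl fun a _ => hG fun i hi => ?_
  have hmod : Fin.ofNat (k + 1) i = Fin.ofNat (k + 1) m ↔ i = m := by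
    rw [Fin.ext_iff, Fin.val_ofNat, Fin.val_ofNat, Nat.mod_eq_of_lt (Nat.lt_succ_of_le hi),
      Nat.mod_eq_of_lt (Nat.lt_succ_of_le hm)]
  simp only [Function.update_apply, hmod]

lemma le_cylinderMean [Nonempty A] {b : ℝ} (h : ∀ z, b ≤ G z) : b ≤ cylinderMean k G :=
  Finset.le_expect Finset.univ_nonempty fun _ _ => h _

variable [DecidableEq A] {y : ℕ → A}

lemma IsNormalSeq.hasMean (hy : IsNormalSeq y) (hG : DependsOn G (Set.Iic k)) :
    HasMean (fun q => G (shift q y)) (cylinderMean k G) := by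
  let F (w : Fin (k + 1) → A) : ℝ := G fun i => w (Fin.ofNat (k + 1) i)
  have hF (q : ℕ) : G (shift q y) = F fun j => y (q + j) := hG fun i hi => by
    simp only [shift, Fin.val_ofNat, Nat.mod_eq_of_lt (Nat.lt_succ_of_le hi)]
  convert HasMean.sum (s := Finset.univ) fun w _ => (hy (k + 1) w).mul_const (F w) using 1
  · ext q
    simp [hF]
  · rw [cylinderMean, Fintype.expect_eq_sum_div_card, Finset.sum_div]
    refine Finset.sum_congr rfl fun w _ => ?_
    rw [Fintype.card_fun, Fintype.card_fin, Nat.cast_pow, one_div_mul_eq_div]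

end CylinderMean

/-- The concatenation of the blocks `c (y 0), c (y 1), …` of length `K`. -/
def blockSeq {A B : Type*} {K : ℕ} [NeZero K] (c : A → Fin K → B) (y : ℕ → A) (i : ℕ) : B :=
  c (y (i / K)) (Fin.ofNat K i)

section BlockSeq

variable {A B : Type*} {K : ℕ} [NeZero K] {c : A → Fin K → B} {y : ℕ → A}

lemma blockSeq_mul_add (q : ℕ) (p : Fin K) : blockSeq c y (K * q + p) = c (y q) p := by
  have hdiv : (K * q + p) / K = q := by
    rw [Nat.mul_add_div (NeZero.pos K), Nat.div_eq_of_lt p.isLt, add_zero]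
  have hmod : Fin.ofNat K (K * q + p) = p := by
    ext
    rw [Fin.val_ofNat, Nat.mul_add_mod, Nat.mod_eq_of_lt p.isLt]
  rw [blockSeq, hdiv, hmod]

lemma exists_eq_mul_add (i : ℕ) : ∃ (q : ℕ) (p : Fin K), i = K * q + p :=
  ⟨i / K, Fin.ofNat K i, (Nat.div_add_mod i K).symm⟩

lemma shift_mul_blockSeq (q : ℕ) : shift (K * q) (blockSeq c y) = blockSeq c (shift q y) := by
  ext i
  obtain ⟨r, p, rfl⟩ := exists_eq_mul_add (K := K) i
  rw [shift, ← add_assoc, ← mul_add, blockSeq_mul_add, blockSeq_mul_add, shift]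

lemma shift_shift (m n : ℕ) : shift m (shift n y) = shift (n + m) y :=
  funext fun i => congrArg y (add_assoc n m i).symm

lemma dependsOn_shift_blockSeq {G : (ℕ → B) → ℝ} {n : ℕ} (hG : DependsOn G (Set.Iic n)) (m : ℕ) :
    DependsOn (fun z => G (shift m (blockSeq c z))) (Set.Iic (m + n)) := by
  intro z z' h
  refine hG fun i hi => ?_
  have hle : (m + i) / K ≤ m + n :=
    (Nat.div_le_self _ _).trans (Nat.add_le_add_left hi m)
  rw [shift, shift, blockSeq, blockSeq, h _ hle]

lemma IsNormalSeq.hasMean_blockSeq [Fintype A] [DecidableEq A] (hy : IsNormalSeq y)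
    {G : (ℕ → B) → ℝ} {n : ℕ} (hG : DependsOn G (Set.Iic n)) (m : ℕ) :
    HasMean (fun i => G (shift i (blockSeq c y)))
      ((∑ p : Fin K, cylinderMean (m + p + n) fun z => G (shift (m + p) (blockSeq c z))) / K) := by
  refine (HasMean.add_left_iff m).1 (HasMean.of_residues fun p => ?_)
  convert hy.hasMean (dependsOn_shift_blockSeq (c := c) hG (m + p)) using 3 with q
  rw [← shift_mul_blockSeq, shift_shift, add_left_comm]

end BlockSeq

section PredictionError

variable {ℓ : ℕ}

/-- The error (`0` or `1`) made by the rule `f` when it predicts the term `x τ` from the other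
`ℓ` terms of the window `x 0, …, x ℓ`. Prediction from the future is the case `τ = 0`, prediction
from the past the case `τ = Fin.last ℓ`. -/
def predError (τ : Fin (ℓ + 1)) (f : (Fin ℓ → Bool) → Bool) (x : ℕ → Bool) : ℝ :=
  if x τ ≠ f fun j => x (τ.succAbove j) then 1 else 0

/-- The least average error of a rule that predicts, in each of the first `N` windows of length
`ℓ + 1` of `x`, the term of index `τ` from the others. -/
noncomputable def minPredError (τ : Fin (ℓ + 1)) (x : ℕ → Bool) (N : ℕ) : ℝ :=
  Finset.univ.inf' Finset.univ_nonempty fun f =>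
    (∑ i ∈ Finset.range N, predError τ f (shift i x)) / N

lemma predError_nonneg (τ : Fin (ℓ + 1)) (f : (Fin ℓ → Bool) → Bool) (x : ℕ → Bool) :
    0 ≤ predError τ f x := by
  unfold predError
  positivity

lemma dependsOn_predError (τ : Fin (ℓ + 1)) (f : (Fin ℓ → Bool) → Bool) :
    DependsOn (predError τ f) (Set.Iic ℓ) := fun x x' h => by
  have heq (j : Fin (ℓ + 1)) : x j = x' j := h _ (Nat.le_of_lt_succ j.isLt)
  simp only [predError, heq]

lemma tendsto_minPredError_of_isLeast {τ : Fin (ℓ + 1)} {x : ℕ → Bool}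
    {L : ((Fin ℓ → Bool) → Bool) → ℝ} {c : ℝ}
    (hL : ∀ f, HasMean (fun i => predError τ f (shift i x)) (L f)) (hc : IsLeast (Set.range L) c) :
    Tendsto (minPredError τ x) atTop (𝓝 c) := by
  have hinf : Finset.univ.inf' Finset.univ_nonempty L = c := by
    obtain ⟨⟨f, rfl⟩, hmin⟩ := hc
    exact le_antisymm (Finset.inf'_le _ (Finset.mem_univ f))
      (Finset.le_inf' _ _ fun g _ => hmin ⟨g, rfl⟩)
  rw [← hinf]
  exact Tendsto.finset_inf'_nhds_apply _ fun f _ => hL f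

lemma one_div_mul_inf' {ι : Type*} {s : Finset ι} (hs : s.Nonempty) (g : ι → ℝ) (N : ℕ) :
    1 / (N : ℝ) * s.inf' hs g = s.inf' hs fun f => g f / N := by
  have hmono : Monotone fun t => 1 / (N : ℝ) * t := monotone_mul_left_of_nonneg (by positivity)
  rw [Finset.apply_inf'_eq_inf'_comp hs (fun t => 1 / (N : ℝ) * t) hmono.map_inf]
  simp only [Function.comp_def, one_div_mul_eq_div]

lemma betaWord_add (x : ℕ → Bool) (N : ℕ) :
    betaWord ℓ x (N + ℓ) = minPredError (0 : Fin (ℓ + 1)) x N := by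
  have herrors (f : (Fin ℓ → Bool) → Bool) :
      (((Finset.range N).filter fun i => x i ≠ f fun j => x (i + 1 + j)).card : ℝ) =
        ∑ i ∈ Finset.range N, predError 0 f (shift i x) := by
    rw [← Finset.sum_boole]
    simp only [predError, shift, Fin.succAbove_zero, Fin.val_zero, Fin.val_succ, add_zero,
      add_assoc, add_comm 1]
  simp only [betaWord, minPredError, herrors, ← one_div_mul_inf', Nat.add_sub_cancel, Nat.cast_add,
    add_sub_cancel_right]

lemma gammaWord_add (x : ℕ → Bool) (N : ℕ) :
    gammaWord ℓ x (N + ℓ) = minPredError (Fin.last ℓ) x N := by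
  have herrors (f : (Fin ℓ → Bool) → Bool) :
      (((Finset.Ico ℓ (N + ℓ)).filter fun i => x i ≠ f fun j => x (i - ℓ + j)).card : ℝ) =
        ∑ i ∈ Finset.range N, predError (Fin.last ℓ) f (shift i x) := by
    rw [← Finset.sum_boole, Finset.sum_Ico_eq_sum_range, Nat.add_sub_cancel]
    simp only [predError, shift, Fin.succAbove_last, Fin.val_last, Fin.val_castSucc,
      add_comm ℓ, Nat.add_sub_cancel]
  simp only [gammaWord, minPredError, herrors, ← one_div_mul_inf', Nat.cast_add,
    add_sub_cancel_right]

end PredictionError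

section BlockErrorRate

variable {A : Type*} [Fintype A] {K ℓ : ℕ} [NeZero K]

/-- The average error of the rule `f` at the symbols in position `p` of their block, in the
concatenation of uniformly random blocks. The window starts at `(K - 1) * τ + p`, so that the
predicted term has index `K * τ + p` and hence belongs to block number `τ`. -/
noncomputable def blockErrorRate (c : A → Fin K → Bool) (τ : Fin (ℓ + 1))
    (f : (Fin ℓ → Bool) → Bool) (p : Fin K) : ℝ :=
  cylinderMean ((K - 1) * τ + p + ℓ) fun z =>
    predError τ f (shift ((K - 1) * τ + p) (blockSeq c z))

variable {c : A → Fin K → Bool} {τ : Fin (ℓ + 1)}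

lemma IsNormalSeq.tendsto_minPredError [DecidableEq A] {y : ℕ → A} (hy : IsNormalSeq y) {E : ℝ}
    (hE : IsLeast (Set.range fun f => ∑ p, blockErrorRate c τ f p) E) :
    Tendsto (minPredError τ (blockSeq c y)) atTop (𝓝 (E / K)) := by
  refine tendsto_minPredError_of_isLeast
    (fun f => hy.hasMean_blockSeq (dependsOn_predError τ f) ((K - 1) * τ)) ?_
  obtain ⟨⟨f, hf⟩, hmin⟩ := hE
  refine ⟨⟨f, congrArg (· / (K : ℝ)) hf⟩, ?_⟩
  rintro _ ⟨g, rfl⟩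
  exact div_le_div_of_nonneg_right (hmin ⟨g, rfl⟩) (Nat.cast_nonneg K)

lemma blockErrorRate_nonneg [Nonempty A] (f : (Fin ℓ → Bool) → Bool) (p : Fin K) :
    0 ≤ blockErrorRate c τ f p :=
  le_cylinderMean fun _ => predError_nonneg τ f _

lemma window_add_target (τ p : ℕ) : (K - 1) * τ + p + τ = K * τ + p := by
  rw [add_right_comm, ← Nat.succ_mul, Nat.succ_eq_add_one, Nat.sub_add_cancel (NeZero.pos K)]

lemma blockErrorRate_eq_cylinderMean (f : (Fin ℓ → Bool) → Bool) (p : Fin K) :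
    blockErrorRate c τ f p = cylinderMean ((K - 1) * τ + p + ℓ) fun z =>
      #{s | c s p ≠ f fun j => blockSeq c (Function.update z τ s)
        ((K - 1) * τ + p + τ.succAbove j)} / Fintype.card A := by
  have hτ : (τ : ℕ) ≤ (K - 1) * τ + p + ℓ := (Fin.is_le τ).trans (Nat.le_add_left _ _)
  rw [blockErrorRate,
    ← cylinderMean_resample (dependsOn_shift_blockSeq (dependsOn_predError τ f) _) hτ]
  congr with z
  rw [Fintype.expect_eq_sum_div_card, ← Finset.sum_boole]
  congr with s
  have htarget : blockSeq c (Function.update z τ s) ((K - 1) * τ + p + τ) = c s p := by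
    rw [window_add_target, blockSeq_mul_add, Function.update_self]
  simp only [predError, shift, htarget]

lemma blockErrorRate_eq_of_forall [Nonempty A] {f : (Fin ℓ → Bool) → Bool} {p : Fin K}
    {g : A → Bool}
    (hf : ∀ z : ℕ → A, (f fun j => blockSeq c z ((K - 1) * τ + p + τ.succAbove j)) = g (z τ)) :
    blockErrorRate c τ f p = #{s | c s p ≠ g s} / Fintype.card A := by
  simp only [blockErrorRate_eq_cylinderMean, hf, Function.update_self]
  exact Fintype.expect_const _

/-- `κ s` stands for the part of the block `s` that the context of the predicted symbol shows. -/
lemma le_blockErrorRate [Nonempty A] {C : Type*} {κ : A → C} {p : Fin K} {N : ℕ}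
    (hκ : ∀ s t, κ s = κ t → ∀ (r : Fin K) (j : Fin ℓ), (p + τ.succAbove j : ℕ) = τ + r →
      c s r = c t r)
    (hN : ∀ g : C → Bool, N ≤ #{s | c s p ≠ g (κ s)}) (f : (Fin ℓ → Bool) → Bool) :
    N / Fintype.card A ≤ blockErrorRate c τ f p := by
  rw [blockErrorRate_eq_cylinderMean]
  refine le_cylinderMean fun z => div_le_div_of_nonneg_right ?_ (Nat.cast_nonneg _)
  let context (s : A) (j : Fin ℓ) : Bool :=
    blockSeq c (Function.update z τ s) ((K - 1) * τ + p + τ.succAbove j)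
  have hcontext : context.FactorsThrough κ := by
    intro s t hst
    ext j
    obtain ⟨q, r, hqr⟩ := exists_eq_mul_add (K := K) ((K - 1) * τ + p + τ.succAbove j)
    simp only [context, hqr, blockSeq_mul_add]
    obtain rfl | hq := eq_or_ne q τ
    · simp only [Function.update_self]
      refine hκ s t hst r j ?_
      have := window_add_target (K := K) τ p
      lia
    · simp only [Function.update_of_ne hq]
  have := hN fun u => f (κ.extend context default u)
  simpa only [hcontext.extend_apply, Nat.cast_le] using this

lemma le_blockErrorRate_zero [Nonempty A] {C : Type*} {κ : A → C} {p : Fin K} {N : ℕ}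
    (hκ : ∀ s t, κ s = κ t → ∀ r > p, c s r = c t r)
    (hN : ∀ g : C → Bool, N ≤ #{s | c s p ≠ g (κ s)}) (f : (Fin ℓ → Bool) → Bool) :
    N / Fintype.card A ≤ blockErrorRate c 0 f p := by
  refine le_blockErrorRate (fun s t hst r j hr => hκ s t hst r ?_) hN f
  rw [Fin.zero_succAbove, Fin.val_succ, Fin.val_zero] at hr
  lia

lemma le_blockErrorRate_last [Nonempty A] {C : Type*} {κ : A → C} {p : Fin K} {N : ℕ}
    (hκ : ∀ s t, κ s = κ t → ∀ r < p, c s r = c t r)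
    (hN : ∀ g : C → Bool, N ≤ #{s | c s p ≠ g (κ s)}) (f : (Fin ℓ → Bool) → Bool) :
    N / Fintype.card A ≤ blockErrorRate c (Fin.last ℓ) f p := by
  refine le_blockErrorRate (fun s t hst r j hr => hκ s t hst r ?_) hN f
  rw [Fin.succAbove_last, Fin.val_castSucc, Fin.val_last] at hr
  lia

lemma blockErrorRate_add_le_sum [Nonempty A] (f : (Fin ℓ → Bool) → Bool) {p q : Fin K}
    (hpq : p ≠ q) :
    blockErrorRate c τ f p + blockErrorRate c τ f q ≤ ∑ r, blockErrorRate c τ f r := by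
  rw [← Finset.sum_pair hpq]
  exact Finset.sum_le_univ_sum_of_nonneg fun r => blockErrorRate_nonneg f r

end BlockErrorRate

/-- The block `1 1 0 a 0 (a ∧ b) 0` that encodes the pair `s = (a, b)`. -/
def markedCode (s : Bool × Bool) : Fin 7 → Bool :=
  ![true, true, false, s.1, false, s.1 && s.2, false]

lemma markedCode_castSucc_and_succ :
    ∀ s (p : Fin 6), (markedCode s p.castSucc && markedCode s p.succ) = decide (p = 0) := by
  decide

/-- The factor `11` marks the beginnings of the blocks, which synchronises the predictors. -/
lemma blockSeq_markedCode_and_succ (z : ℕ → Bool × Bool) (i : ℕ) :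
    (blockSeq markedCode z i && blockSeq markedCode z (i + 1)) = decide (7 ∣ i) := by
  obtain ⟨q, p, rfl⟩ := exists_eq_mul_add (K := 7) i
  induction p using Fin.lastCases with
  | last =>
    have hdvd : ¬ 7 ∣ 7 * q + Fin.last 6 := by simp [Nat.dvd_add_right]
    simp only [blockSeq_mul_add, hdvd, decide_false]
    rfl
  | cast p =>
    have hdvd : 7 ∣ 7 * q + p.castSucc ↔ p = 0 := by
      rw [Fin.val_castSucc, Fin.ext_iff, Fin.val_zero]
      lia
    rw [add_assoc, Fin.val_castSucc, ← Fin.val_succ, ← Fin.val_castSucc, blockSeq_mul_add,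
      blockSeq_mul_add, markedCode_castSucc_and_succ, decide_eq_decide, hdvd]

section Backward

variable {ℓ : ℕ}

/-- The best prediction of the symbol in position `p` of the block of `s` from the symbols to its
right: they show `a ∧ b` before `a`, and `a = a ∧ b` fails with probability `1 / 4` only. -/
def backwardGuess (p : Fin 7) (s : Bool × Bool) : Bool :=
  ![true, true, false, s.1 && s.2, false, false, false] p

/-- The rule that realises `backwardGuess`. Its three cases correspond to `p = 0`, `p = 1` and
`p = 3`, recognised by the position of the marker of the next block. -/
def backwardPredictor (hℓ : 8 ≤ ℓ) (v : Fin ℓ → Bool) : Bool :=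
  (v ⟨6, by lia⟩ && v ⟨7, by lia⟩) || (v ⟨5, by lia⟩ && v ⟨6, by lia⟩) ||
    (v ⟨3, by lia⟩ && v ⟨4, by lia⟩ && v ⟨1, by lia⟩)

lemma backwardPredictor_apply (hℓ : 8 ≤ ℓ) (p : Fin 7) (z : ℕ → Bool × Bool) :
    backwardPredictor hℓ (fun j => blockSeq markedCode z (p + 1 + j)) = backwardGuess p (z 0) := by
  have h5 : blockSeq markedCode z 5 = ((z 0).1 && (z 0).2) := rfl
  simp only [backwardPredictor, blockSeq_markedCode_and_succ]
  fin_cases p <;> simp [h5, backwardGuess]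

lemma sum_blockErrorRate_backwardPredictor (hℓ : 8 ≤ ℓ) :
    ∑ p, blockErrorRate markedCode (0 : Fin (ℓ + 1)) (backwardPredictor hℓ) p = 1 / 2 := by
  have hrate (p : Fin 7) : blockErrorRate markedCode 0 (backwardPredictor hℓ) p =
      #{s | markedCode s p ≠ backwardGuess p s} / Fintype.card (Bool × Bool) :=
    blockErrorRate_eq_of_forall fun z => by
      simp only [Fin.val_zero, mul_zero, zero_add, Fin.zero_succAbove, Fin.val_succ,
        ← backwardPredictor_apply hℓ, add_assoc, add_comm 1]
  have hcount : ∑ p, #{s | markedCode s p ≠ backwardGuess p s} = 2 := by decide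
  simp only [hrate, ← Finset.sum_div, ← Nat.cast_sum, hcount]
  norm_num

lemma isLeast_sum_blockErrorRate_zero (hℓ : 8 ≤ ℓ) :
    IsLeast (Set.range fun f => ∑ p, blockErrorRate markedCode (0 : Fin (ℓ + 1)) f p) (1 / 2) := by
  refine ⟨⟨_, sum_blockErrorRate_backwardPredictor hℓ⟩, ?_⟩
  rintro _ ⟨f, rfl⟩
  have hand := le_blockErrorRate_zero (c := markedCode) (κ := fun _ => ()) (p := 5) (N := 1)
    (by decide) (by decide) f
  have hfst := le_blockErrorRate_zero (c := markedCode) (κ := fun s => s.1 && s.2) (p := 3) (N := 1)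
    (by decide) (by decide) f
  calc (1 / 2 : ℝ)
      = (1 : ℕ) / Fintype.card (Bool × Bool) + (1 : ℕ) / Fintype.card (Bool × Bool) := by norm_num
    _ ≤ _ := add_le_add hand hfst
    _ ≤ _ := blockErrorRate_add_le_sum f (by decide)

end Backward

section Forward

variable {ℓ : ℕ}

/-- The best prediction of the symbol in position `p` of a block from the symbols to its left. -/
def forwardGuess (p : Fin 7) : Bool :=
  ![true, true, false, false, false, false, false] p

/-- The rule that realises `forwardGuess`. Its two cases correspond to `p = 0` and `p = 1`,
recognised by the position of the marker of the previous block. -/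
def forwardPredictor (hℓ : 8 ≤ ℓ) (v : Fin ℓ → Bool) : Bool :=
  (v ⟨ℓ - 7, by lia⟩ && v ⟨ℓ - 7 + 1, by lia⟩) || (v ⟨ℓ - 8, by lia⟩ && v ⟨ℓ - 8 + 1, by lia⟩)

lemma forwardPredictor_apply (hℓ : 8 ≤ ℓ) (p : Fin 7) (z : ℕ → Bool × Bool) :
    forwardPredictor hℓ (fun j => blockSeq markedCode z (6 * ℓ + p + j)) = forwardGuess p := by
  have h0 : 7 ∣ 6 * ℓ + p + (ℓ - 7) ↔ p = 0 := by
    rw [Fin.ext_iff, Fin.val_zero]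
    omega
  have h1 : 7 ∣ 6 * ℓ + p + (ℓ - 8) ↔ p = 1 := by
    rw [Fin.ext_iff, Fin.val_one]
    omega
  simp only [forwardPredictor, ← add_assoc, blockSeq_markedCode_and_succ, h0, h1]
  fin_cases p <;> rfl

lemma sum_blockErrorRate_forwardPredictor (hℓ : 8 ≤ ℓ) :
    ∑ p, blockErrorRate markedCode (Fin.last ℓ) (forwardPredictor hℓ) p = 3 / 4 := by
  have hrate (p : Fin 7) : blockErrorRate markedCode (Fin.last ℓ) (forwardPredictor hℓ) p =
      #{s | markedCode s p ≠ forwardGuess p} / Fintype.card (Bool × Bool) :=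
    blockErrorRate_eq_of_forall fun z => by
      simp only [Fin.val_last, Fin.succAbove_last, Fin.val_castSucc]
      exact forwardPredictor_apply hℓ p z
  have hcount : ∑ p, #{s | markedCode s p ≠ forwardGuess p} = 3 := by decide
  simp only [hrate, ← Finset.sum_div, ← Nat.cast_sum, hcount]
  norm_num

lemma isLeast_sum_blockErrorRate_last (hℓ : 8 ≤ ℓ) :
    IsLeast (Set.range fun f => ∑ p, blockErrorRate markedCode (Fin.last ℓ) f p) (3 / 4) := by
  refine ⟨⟨_, sum_blockErrorRate_forwardPredictor hℓ⟩, ?_⟩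
  rintro _ ⟨f, rfl⟩
  have hfst := le_blockErrorRate_last (c := markedCode) (κ := fun _ => ()) (p := 3) (N := 2)
    (by decide) (by decide) f
  have hand := le_blockErrorRate_last (c := markedCode) (κ := Prod.fst) (p := 5) (N := 1)
    (by decide) (by decide) f
  calc (3 / 4 : ℝ)
      = (2 : ℕ) / Fintype.card (Bool × Bool) + (1 : ℕ) / Fintype.card (Bool × Bool) := by norm_num
    _ ≤ _ := add_le_add hfst hand
    _ ≤ _ := blockErrorRate_add_le_sum f (by decide)

end Forward

lemma IsNormalSeq.tendsto_betaWord {y : ℕ → Bool × Bool} (hy : IsNormalSeq y) :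
    ∀ᶠ ℓ in atTop, Tendsto (betaWord ℓ (blockSeq markedCode y)) atTop (𝓝 (1 / 14)) := by
  filter_upwards [eventually_ge_atTop 8] with ℓ hℓ
  rw [← tendsto_add_atTop_iff_nat ℓ]
  simp only [betaWord_add]
  convert hy.tendsto_minPredError (isLeast_sum_blockErrorRate_zero hℓ) using 2
  norm_num

lemma IsNormalSeq.tendsto_gammaWord {y : ℕ → Bool × Bool} (hy : IsNormalSeq y) :
    ∀ᶠ ℓ in atTop, Tendsto (gammaWord ℓ (blockSeq markedCode y)) atTop (𝓝 (3 / 28)) := by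
  filter_upwards [eventually_ge_atTop 8] with ℓ hℓ
  rw [← tendsto_add_atTop_iff_nat ℓ]
  simp only [gammaWord_add]
  convert hy.tendsto_minPredError (isLeast_sum_blockErrorRate_last hℓ) using 2
  norm_num

theorem beta_ne_gamma :
    ∃ x : ℕ → Bool,
      betaLow x = betaUp x ∧ gammaLow x = gammaUp x ∧ betaUp x < gammaLow x ∧
      betaLow x ≠ gammaLow x ∧ betaUp x ≠ gammaUp x := by
  obtain ⟨y, hy⟩ := exists_isNormalSeq (Bool × Bool)
  let x := blockSeq markedCode y
  have hβlow : betaLow x = 1 / 14 := liminf_liminf_eq_of_eventually_tendsto hy.tendsto_betaWord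
  have hβup : betaUp x = 1 / 14 := limsup_limsup_eq_of_eventually_tendsto hy.tendsto_betaWord
  have hγlow : gammaLow x = 3 / 28 := liminf_liminf_eq_of_eventually_tendsto hy.tendsto_gammaWord
  have hγup : gammaUp x = 3 / 28 := limsup_limsup_eq_of_eventually_tendsto hy.tendsto_gammaWord
  refine ⟨x, ?_⟩
  rw [hβlow, hβup, hγlow, hγup]
  norm_num
end

section
/- Let Q be a finite set, let P⁰ and P¹ be entrywise-nonnegative Q×Q real matrices such that P := P⁰ + P¹ is stochastic (every row sums to 1), and let π be a probability vector on Q with πP = π. For b ∈ {0,1} and i ∈ Q let θ_{i,b} := Σ_{j∈Q} Pᵇ_{ij}, and for a word u = b_1…b_k ∈ B^k define μ(u) := Σ_{q_0,…,q_k ∈ Q} π(q_0)·Π_{j=1}^{k} P^{b_j}_{q_{j−1} q_j}. If x ∈ B^ℕ is generic for μ, i.e., for every word u one has lim_{n→∞} occ(x[0:n), u)/n = μ(u), then γ̲(x) ≥ Σ_{i∈Q} π_i·min(θ_{i,0}, θ_{i,1}). -/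
open Filter Topology

/-- One step of the labelled Markov chain: read symbol `b`, updating the
distribution-like vector `v` using the substochastic matrix `P b`. -/
noncomputable def mcStep {Q : Type*} [Fintype Q] (P : Bool → Q → Q → ℝ)
    (v : Q → ℝ) (b : Bool) : Q → ℝ :=
  fun q => ∑ q' : Q, v q' * P b q' q

/-- `μ(b_1…b_k) = Σ_{q_0,…,q_k} π(q_0) · Π_{j=1}^k P^{b_j}_{q_{j-1} q_j}`. -/
noncomputable def mcMeasure {Q : Type*} [Fintype Q] (π : Q → ℝ)
    (P : Bool → Q → Q → ℝ) (u : List Bool) : ℝ :=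
  ∑ q : Q, (u.foldl (mcStep P) π) q

/-!
For a generic `x`, choosing the best predictor separately for each context shows that `γ_ℓ(x[0:n))`
converges to `∑ min(μ(u0), μ(u1))` over `u ∈ B^ℓ`, the Bayes error of predicting the next letter
from `u`. Knowing the hidden state after `u` can only help: if `v_u` is the (unnormalized)
distribution of that state, then `μ(ub) = ∑ i, v_u i * θ i b`, so `min(μ(u0), μ(u1))` is at least
`∑ i, v_u i * min(θ i 0, θ i 1)`. By stationarity the `v_u` with `u ∈ B^ℓ` add up to `π`.
-/

/-- `x` is generic for `μ`: every word `u` has asymptotic frequency `μ u` in `x`. Here `μ` is an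
arbitrary function on words, standing for the values of a measure on cylinder sets. -/
def IsGenericFor (x : ℕ → Bool) (μ : List Bool → ℝ) : Prop :=
  ∀ u : List Bool, Tendsto (fun n => (occ x n u : ℝ) / n) atTop (𝓝 (μ u))

/-- The total weight of the less likely continuations of the words of length `ℓ`. When `μ` gives the
word probabilities of a stationary process, this is its Bayes error: the least probability of error
in predicting a letter from the `ℓ` preceding ones. The weights are unnormalized so that occurrence
counts are allowed too. -/
noncomputable def bayesError (μ : List Bool → ℝ) (ℓ : ℕ) : ℝ :=
  ∑ u : Fin ℓ → Bool, min (μ (List.ofFn u ++ [false])) (μ (List.ofFn u ++ [true]))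

theorem inf'_univ_pi_sum {ι κ M : Type*} [Fintype ι] [DecidableEq ι] [Fintype κ] [Nonempty κ]
    [AddCommMonoid M] [LinearOrder M] [IsOrderedAddMonoid M] (g : ι → κ → M) :
    (Finset.univ : Finset (ι → κ)).inf' Finset.univ_nonempty (fun f => ∑ i, g i (f i)) =
      ∑ i, Finset.univ.inf' Finset.univ_nonempty (g i) := by
  choose f _ hf using fun i => Finset.exists_mem_eq_inf' Finset.univ_nonempty (g i)
  refine le_antisymm ?_ (Finset.le_inf' _ _ fun f' _ =>
    Finset.sum_le_sum fun i _ => Finset.inf'_le _ (Finset.mem_univ (f' i)))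
  calc _ ≤ ∑ i, g i (f i) := Finset.inf'_le _ (Finset.mem_univ f)
    _ = _ := Finset.sum_congr rfl fun i _ => (hf i).symm

section Sequence

variable (x : ℕ → Bool)

theorem factor_succ (i ℓ : ℕ) : factor x i (ℓ + 1) = factor x i ℓ ++ [x (i + ℓ)] := by
  rw [factor, List.ofFn_succ', List.concat_eq_append]
  simp [factor]

theorem factor_succ_eq_ofFn_append_iff (i : ℕ) {ℓ : ℕ} (u : Fin ℓ → Bool) (b : Bool) :
    factor x i (ℓ + 1) = List.ofFn u ++ [b] ↔
      (fun j : Fin ℓ => x (i + j)) = u ∧ x (i + ℓ) = b := by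
  rw [factor_succ, factor, ← List.concat_eq_append, ← List.concat_eq_append, List.concat_inj,
    List.ofFn_injective.eq_iff]

theorem occ_ofFn_append (n : ℕ) {ℓ : ℕ} (u : Fin ℓ → Bool) (b : Bool) :
    occ x n (List.ofFn u ++ [b]) =
      ((Finset.range (n - ℓ)).filter
        (fun i => (fun j : Fin ℓ => x (i + j)) = u ∧ x (i + ℓ) = b)).card := by
  have hlen : (List.ofFn u ++ [b]).length = ℓ + 1 := by simp
  simp only [occ, hlen, Nat.add_sub_add_right, factor_succ_eq_ofFn_append_iff]

theorem card_prediction_errors_eq_sum_occ {ℓ : ℕ} (n : ℕ) (f : (Fin ℓ → Bool) → Bool) :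
    ((Finset.Ico ℓ n).filter (fun i => x i ≠ f (fun j => x (i - ℓ + j)))).card =
      ∑ u : Fin ℓ → Bool, occ x n (List.ofFn u ++ [!f u]) := by
  have shift : ((Finset.Ico ℓ n).filter (fun i => x i ≠ f (fun j => x (i - ℓ + j)))).card =
      ((Finset.range (n - ℓ)).filter
        (fun i => x (i + ℓ) = !f (fun j => x (i + j)))).card := by
    simp only [Finset.card_filter, Finset.sum_Ico_eq_sum_range, Bool.eq_not,
      add_comm ℓ, add_tsub_cancel_right]
  rw [shift, Finset.card_eq_sum_card_fiberwise (f := fun i (j : Fin ℓ) => x (i + j))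
    (t := Finset.univ) fun _ _ => Finset.mem_coe.mpr (Finset.mem_univ _)]
  refine Finset.sum_congr rfl fun u _ => ?_
  rw [occ_ofFn_append, Finset.filter_filter]
  congr 1
  refine Finset.filter_congr fun i _ => ?_
  rw [and_comm]
  exact and_congr_right fun hu => by rw [hu]

theorem gammaWord_eq_bayesError_occ_div (ℓ n : ℕ) :
    gammaWord ℓ x n = bayesError (fun u => (occ x n u : ℝ)) ℓ / ((n : ℝ) - ℓ) := by
  simp only [gammaWord, card_prediction_errors_eq_sum_occ, Nat.cast_sum, bayesError]
  rw [inf'_univ_pi_sum fun u b => (occ x n (List.ofFn u ++ [!b]) : ℝ), one_div_mul_eq_div]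
  simp [Fintype.univ_bool]

theorem gammaWord_le_one {ℓ n : ℕ} (hn : ℓ ≤ n) : gammaWord ℓ x n ≤ 1 := by
  rw [gammaWord, one_div_mul_eq_div, ← Nat.cast_sub hn]
  refine div_le_one_of_le₀ ?_ (Nat.cast_nonneg _)
  refine (Finset.inf'_le _ (Finset.mem_univ fun _ => true)).trans (Nat.cast_le.mpr ?_)
  exact (Finset.card_filter_le _ _).trans_eq (Nat.card_Ico ℓ n)

end Sequence

namespace IsGenericFor

variable {x : ℕ → Bool} {μ : List Bool → ℝ}

theorem tendsto_gammaWord (hx : IsGenericFor x μ) (ℓ : ℕ) :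
    Tendsto (gammaWord ℓ x) atTop (𝓝 (bayesError μ ℓ)) := by
  have freq : Tendsto (fun n : ℕ => bayesError (fun u => (occ x n u : ℝ) / n) ℓ) atTop
      (𝓝 (bayesError μ ℓ)) :=
    tendsto_finsetSum _ fun u _ => (hx _).min (hx _)
  have normalization : Tendsto (fun n : ℕ => (n : ℝ) / (n - ℓ)) atTop (𝓝 1) := by
    simpa only [sub_eq_add_neg] using tendsto_natCast_div_add_atTop (-(ℓ : ℝ))
  rw [← mul_one (bayesError μ ℓ)]
  refine (freq.mul normalization).congr' ?_
  filter_upwards [eventually_ne_atTop 0] with n hn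
  have hn' : (n : ℝ) ≠ 0 := Nat.cast_ne_zero.mpr hn
  simp only [gammaWord_eq_bayesError_occ_div, bayesError, min_div_div_right n.cast_nonneg,
    ← Finset.sum_div]
  exact div_mul_div_cancel₀ hn'

theorem bayesError_le_one (hx : IsGenericFor x μ) (ℓ : ℕ) : bayesError μ ℓ ≤ 1 :=
  le_of_tendsto (hx.tendsto_gammaWord ℓ)
    ((eventually_ge_atTop ℓ).mono fun _ hn => gammaWord_le_one x hn)

theorem gammaLow_eq_liminf_bayesError (hx : IsGenericFor x μ) :
    gammaLow x = atTop.liminf (bayesError μ) :=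
  congrArg atTop.liminf (funext fun ℓ => (hx.tendsto_gammaWord ℓ).liminf_eq)

theorem le_gammaLow (hx : IsGenericFor x μ) {a : ℝ} (ha : ∀ ℓ, a ≤ bayesError μ ℓ) :
    a ≤ gammaLow x := by
  rw [hx.gammaLow_eq_liminf_bayesError]
  have bounded : IsBoundedUnder (· ≤ ·) atTop (bayesError μ) :=
    isBoundedUnder_of ⟨1, hx.bayesError_le_one⟩
  exact le_liminf_of_le bounded.isCoboundedUnder_ge (Eventually.of_forall ha)

end IsGenericFor

section MarkovChain

variable {Q : Type*} [Fintype Q] {P : Bool → Q → Q → ℝ}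

theorem foldl_mcStep_nonneg (hP : ∀ b i j, 0 ≤ P b i j) {v : Q → ℝ} (hv : ∀ i, 0 ≤ v i)
    (u : List Bool) (q : Q) : 0 ≤ u.foldl (mcStep P) v q := by
  induction u generalizing v with
  | nil => exact hv q
  | cons b _ ih =>
    exact ih fun i => Finset.sum_nonneg fun j _ => mul_nonneg (hv j) (hP b j i)

theorem mcMeasure_append_singleton (π : Q → ℝ) (P : Bool → Q → Q → ℝ) (u : List Bool) (b : Bool) :
    mcMeasure π P (u ++ [b]) = ∑ i, u.foldl (mcStep P) π i * ∑ j, P b i j := by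
  simp only [mcMeasure, List.foldl_append, List.foldl_cons, List.foldl_nil, mcStep]
  rw [Finset.sum_comm]
  simp only [Finset.mul_sum]

theorem sum_foldl_mcStep_of_stationary {π : Q → ℝ}
    (hπ : ∀ j, ∑ i, π i * (P false i j + P true i j) = π j) (ℓ : ℕ) (q : Q) :
    ∑ u : Fin ℓ → Bool, (List.ofFn u).foldl (mcStep P) π q = π q := by
  induction ℓ generalizing q with
  | zero => simp
  | succ ℓ ih =>
    have read_last (b : Bool) (u : Fin ℓ → Bool) :
        (List.ofFn (Fin.snoc u b : Fin (ℓ + 1) → Bool)).foldl (mcStep P) π q =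
          ∑ i, (List.ofFn u).foldl (mcStep P) π i * P b i q := by
      rw [List.ofFn_succ', List.concat_eq_append, List.foldl_append]
      simp [mcStep]
    calc ∑ u : Fin (ℓ + 1) → Bool, (List.ofFn u).foldl (mcStep P) π q
        = ∑ b, ∑ u : Fin ℓ → Bool, ∑ i, (List.ofFn u).foldl (mcStep P) π i * P b i q := by
          rw [← (Fin.snocEquiv fun _ => Bool).sum_comp, Fintype.sum_prod_type]
          exact Finset.sum_congr rfl fun b _ => Finset.sum_congr rfl fun u _ => read_last b u
      _ = ∑ b, ∑ i, π i * P b i q := by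
          refine Finset.sum_congr rfl fun b _ => ?_
          rw [Finset.sum_comm]
          simp only [← Finset.sum_mul, ih]
      _ = ∑ i, π i * (P false i q + P true i q) := by
          simp only [Fintype.sum_bool, ← Finset.sum_add_distrib, ← mul_add, add_comm]
      _ = π q := hπ q

theorem sum_mul_min_le_min_mcMeasure_append {π : Q → ℝ} (hP : ∀ b i j, 0 ≤ P b i j)
    (hπ : ∀ i, 0 ≤ π i) (u : List Bool) :
    ∑ i, u.foldl (mcStep P) π i * min (∑ j, P false i j) (∑ j, P true i j) ≤
      min (mcMeasure π P (u ++ [false])) (mcMeasure π P (u ++ [true])) := by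
  simp only [mcMeasure_append_singleton]
  refine le_min (Finset.sum_le_sum fun i _ => ?_) (Finset.sum_le_sum fun i _ => ?_)
  · exact mul_le_mul_of_nonneg_left (min_le_left _ _) (foldl_mcStep_nonneg hP hπ u i)
  · exact mul_le_mul_of_nonneg_left (min_le_right _ _) (foldl_mcStep_nonneg hP hπ u i)

theorem sum_mul_min_le_bayesError_mcMeasure {π : Q → ℝ} (hP : ∀ b i j, 0 ≤ P b i j)
    (hπ : ∀ i, 0 ≤ π i) (hstat : ∀ j, ∑ i, π i * (P false i j + P true i j) = π j) (ℓ : ℕ) :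
    ∑ i, π i * min (∑ j, P false i j) (∑ j, P true i j) ≤ bayesError (mcMeasure π P) ℓ :=
  calc ∑ i, π i * min (∑ j, P false i j) (∑ j, P true i j)
      = ∑ u : Fin ℓ → Bool, ∑ i,
          (List.ofFn u).foldl (mcStep P) π i * min (∑ j, P false i j) (∑ j, P true i j) := by
        rw [Finset.sum_comm]
        simp only [← Finset.sum_mul, sum_foldl_mcStep_of_stationary hstat]
    _ ≤ bayesError (mcMeasure π P) ℓ :=
        Finset.sum_le_sum fun u _ => sum_mul_min_le_min_mcMeasure_append hP hπ (List.ofFn u)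

theorem gammaLow_ge_of_generic_markov_general {π : Q → ℝ} (hP : ∀ b i j, 0 ≤ P b i j)
    (hπ : ∀ i, 0 ≤ π i) (hstat : ∀ j, ∑ i, π i * (P false i j + P true i j) = π j)
    {x : ℕ → Bool} (hx : IsGenericFor x (mcMeasure π P)) :
    ∑ i, π i * min (∑ j, P false i j) (∑ j, P true i j) ≤ gammaLow x :=
  hx.le_gammaLow (sum_mul_min_le_bayesError_mcMeasure hP hπ hstat)

end MarkovChain

theorem gammaLow_ge_of_generic_markov {Q : Type*} [Fintype Q]
    (P0 P1 : Q → Q → ℝ)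
    (hP0 : ∀ i j, 0 ≤ P0 i j) (hP1 : ∀ i j, 0 ≤ P1 i j)
    (hrow : ∀ i, ∑ j : Q, (P0 i j + P1 i j) = 1)
    (π : Q → ℝ) (hπ0 : ∀ i, 0 ≤ π i) (hπ1 : ∑ i : Q, π i = 1)
    (hstat : ∀ j, ∑ i : Q, π i * (P0 i j + P1 i j) = π j)
    (x : ℕ → Bool)
    (hgen : ∀ u : List Bool,
      Filter.Tendsto (fun n => (occ x n u : ℝ) / n) atTop
        (nhds (mcMeasure π (fun b => bif b then P1 else P0) u))) :
    ∑ i : Q, π i * min (∑ j : Q, P0 i j) (∑ j : Q, P1 i j) ≤ gammaLow x :=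
  gammaLow_ge_of_generic_markov_general (P := fun b => bif b then P1 else P0)
    (Bool.forall_bool.mpr ⟨hP0, hP1⟩) hπ0 hstat hgen
end
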